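/- Suppose ς ∈ L²(ℝ²) satisfies ‖ς‖₂ < √(2/π). Then for every u ∈ W^{1,2}(ℝ²) one has ∫(|∇u|² + u(e^u - 1) - ς u) dx ≥ (√(2/π) - ‖ς‖₂)·‖u‖_{1,2} - 2/π. -/

import Mathlib

open MeasureTheory

/-- Cauchy-Schwarz for real integrals. -/
theorem vc_cs {α : Type*} [MeasurableSpace α] {μ : Measure α} (f g : α → ℝ)
    (hf : Integrable (fun x => f x ^ 2) μ) (hg : Integrable (fun x => g x ^ 2) μ)
    (hfg : Integrable (fun x => f x * g x) μ) :
    (∫ x, f x * g x ∂μ) ^ 2 ≤ (∫ x, f x ^ 2 ∂μ) * ∫ x, g x ^ 2 ∂μ := by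
  have h : ∀ t : ℝ, 0 ≤ (∫ x, f x ^ 2 ∂μ) * (t * t) + (2 * ∫ x, f x * g x ∂μ) * t
      + ∫ x, g x ^ 2 ∂μ := by
    intro t
    have h1 : 0 ≤ ∫ x, ((t * t) * f x ^ 2 + (2 * t) * (f x * g x) + g x ^ 2) ∂μ := by
      apply integral_nonneg
      intro x
      have : (t * t) * f x ^ 2 + (2 * t) * (f x * g x) + g x ^ 2 = (t * f x + g x) ^ 2 := by ring
      simp only [Pi.zero_apply]
      rw [this]; positivity
    have i1 : Integrable (fun x => (t * t) * f x ^ 2) μ := hf.const_mul _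
    have i2 : Integrable (fun x => (2 * t) * (f x * g x)) μ := hfg.const_mul _
    have i3 : Integrable (fun x => (t * t) * f x ^ 2 + (2 * t) * (f x * g x)) μ := i1.add i2
    rw [integral_add i3 hg, integral_add i1 i2, integral_const_mul, integral_const_mul] at h1
    linarith
  have := discrim_le_zero h
  unfold discrim at this
  linarith

/-- One-dimensional sup bound. -/
theorem vc_one_dim (f g : ℝ → ℝ) (hf : Differentiable ℝ f) (hd : ∀ x, |deriv f x| ≤ g x)
    (h2 : Integrable (fun x => f x ^ 2)) (hfg : Integrable (fun x => |f x| * g x)) (a : ℝ) :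
    f a ^ 2 ≤ 2 * ∫ x, |f x| * g x := by
  have hder : ∀ x, HasDerivAt (fun x => f x ^ 2) (2 * (f x * deriv f x)) x := by
    intro x
    have := (hf x).hasDerivAt.pow 2
    convert! this using 1
    simp; ring
  have hb : ∀ x, ‖2 * (f x * deriv f x)‖ ≤ 2 * (|f x| * g x) := by
    intro x
    rw [Real.norm_eq_abs, abs_mul, abs_mul, abs_two]
    have := hd x
    gcongr
  have hint : Integrable (fun x => 2 * (f x * deriv f x)) := by
    refine (hfg.const_mul 2).mono' ?_ (Filter.Eventually.of_forall hb)
    exact ((hf.continuous.measurable.mul (measurable_deriv f)).const_mul 2).aestronglyMeasurable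
  have ht := tendsto_zero_of_hasDerivAt_of_integrableOn_Iic (a := a) (fun x _ => hder x)
    hint.integrableOn h2.integrableOn
  have h := integral_Iic_of_hasDerivAt_of_tendsto' (a := a) (fun x _ => hder x)
    hint.integrableOn ht
  rw [sub_zero] at h
  rw [← h, ← integral_const_mul]
  calc ∫ x in Set.Iic a, 2 * (f x * deriv f x)
      ≤ ∫ x in Set.Iic a, 2 * (|f x| * g x) :=
        integral_mono hint.integrableOn (hfg.const_mul 2).integrableOn
          (fun x => (le_abs_self _).trans (hb x))
    _ ≤ ∫ x, 2 * (|f x| * g x) :=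
        setIntegral_le_integral (hfg.const_mul 2)
          (Filter.Eventually.of_forall fun x => (norm_nonneg _).trans (hb x))

/-- Ladyzhenskaya type inequality on the product. -/
theorem vc_prod (v G : ℝ × ℝ → ℝ) (hv : Continuous v)
    (hd1 : ∀ y, Differentiable ℝ (fun x => v (x, y)))
    (hd2 : ∀ x, Differentiable ℝ (fun y => v (x, y)))
    (hb1 : ∀ y x, |deriv (fun x => v (x, y)) x| ≤ G (x, y))
    (hb2 : ∀ x y, |deriv (fun y => v (x, y)) y| ≤ G (x, y))
    (h2 : Integrable (fun z => v z ^ 2)) (hG : Integrable (fun z => |v z| * G z)) :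
    Integrable (fun z => v z ^ 4) ∧ ∫ z, v z ^ 4 ≤ 4 * (∫ z, |v z| * G z) ^ 2 := by
  rw [Measure.volume_eq_prod] at *
  set F : ℝ → ℝ := fun y => ∫ x, |v (x, y)| * G (x, y) with hF
  set H : ℝ → ℝ := fun x => ∫ y, |v (x, y)| * G (x, y) with hH
  have hFi : Integrable F := hG.integral_prod_right
  have hHi : Integrable H := hG.integral_prod_left
  have e1 : ∀ᵐ y : ℝ, ∀ x, v (x, y) ^ 2 ≤ 2 * F y := by
    filter_upwards [h2.prod_left_ae, hG.prod_left_ae] with y k2 kG x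
    exact vc_one_dim (fun x => v (x, y)) (fun x => G (x, y)) (hd1 y) (hb1 y) k2 kG x
  have e2 : ∀ᵐ x : ℝ, ∀ y, v (x, y) ^ 2 ≤ 2 * H x := by
    filter_upwards [h2.prod_right_ae, hG.prod_right_ae] with x k2 kG y
    exact vc_one_dim (fun y => v (x, y)) (fun y => G (x, y)) (hd2 x) (hb2 x) k2 kG y
  have e1' : ∀ᵐ z : ℝ × ℝ ∂(volume.prod volume), ∀ x, v (x, z.2) ^ 2 ≤ 2 * F z.2 :=
    Measure.quasiMeasurePreserving_snd.ae e1
  have e2' : ∀ᵐ z : ℝ × ℝ ∂(volume.prod volume), ∀ y, v (z.1, y) ^ 2 ≤ 2 * H z.1 :=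
    Measure.quasiMeasurePreserving_fst.ae e2
  have hHF : Integrable (fun z : ℝ × ℝ => 4 * (H z.1 * F z.2)) (volume.prod volume) :=
    (hHi.mul_prod hFi).const_mul 4
  have hle : ∀ᵐ z : ℝ × ℝ ∂(volume.prod volume), v z ^ 4 ≤ 4 * (H z.1 * F z.2) := by
    filter_upwards [e1', e2'] with z k1 k2
    have a1 := k1 z.1
    have a2 := k2 z.2
    have : v z ^ 2 * v z ^ 2 ≤ (2 * H z.1) * (2 * F z.2) :=
      mul_le_mul a2 a1 (sq_nonneg _) ((sq_nonneg _).trans a2)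
    nlinarith
  have hi : Integrable (fun z => v z ^ 4) (volume.prod volume) := by
    refine hHF.mono' (hv.pow 4).aestronglyMeasurable ?_
    filter_upwards [hle] with z hz
    rwa [Real.norm_eq_abs, abs_of_nonneg (by positivity)]
  refine ⟨hi, (integral_mono_ae hi hHF hle).trans ?_⟩
  rw [integral_const_mul, integral_prod_mul, hF, hH, ← integral_prod _ hG,
    ← integral_prod_symm _ hG, sq]

theorem vc_equiv_apply (x y : ℝ) :
    (((MeasurableEquiv.toLp 2 _).symm.trans (MeasurableEquiv.finTwoArrow (α := ℝ))).symm (x, y))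
      = x • EuclideanSpace.single (0 : Fin 2) (1 : ℝ) + y • EuclideanSpace.single 1 1 := by
  ext i; fin_cases i <;> simp [MeasurableEquiv.finTwoArrow, MeasurableEquiv.toLp,
    MeasurableEquiv.piFinTwo] <;> rfl

theorem vc_l4 (u : EuclideanSpace ℝ (Fin 2) → ℝ)
    (hdiff : Differentiable ℝ u)
    (h2 : Integrable (fun x => (u x) ^ 2))
    (hg : Integrable (fun x => ‖gradient u x‖ ^ 2)) :
    Integrable (fun x => u x ^ 4) ∧
      ∫ x, u x ^ 4 ≤ 4 * ((∫ x, u x ^ 2) * ∫ x, ‖gradient u x‖ ^ 2) := by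
  have hn : ∀ x, ‖gradient u x‖ = ‖fderiv ℝ u x‖ := by
    intro x; simp [gradient]
  simp only [hn] at *
  have hug : Integrable (fun x => |u x| * ‖fderiv ℝ u x‖) := by
    refine (h2.add hg).mono' ?_ (Filter.Eventually.of_forall fun x => ?_)
    · exact (hdiff.continuous.abs.measurable.mul (measurable_fderiv ℝ u).norm).aestronglyMeasurable
    · simp only [Pi.add_apply, Real.norm_eq_abs, abs_mul, abs_abs, abs_norm]
      nlinarith [sq_nonneg (|u x| - ‖fderiv ℝ u x‖), sq_abs (u x), sq_nonneg (u x),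
        sq_nonneg ‖fderiv ℝ u x‖]
  have hcs := vc_cs (fun x => |u x|) (fun x => ‖fderiv ℝ u x‖) (by simpa using h2) hg hug
  simp only [sq_abs] at hcs
  set e := ((MeasurableEquiv.toLp 2 (Fin 2 → ℝ)).symm.trans
    (MeasurableEquiv.finTwoArrow (α := ℝ))).symm with he
  have hmp : MeasurePreserving e volume volume :=
    ((EuclideanSpace.volume_preserving_symm_measurableEquiv_toLp (Fin 2)).trans
      (volume_preserving_finTwoArrow ℝ)).symm _
  have hap : ∀ x y : ℝ, e (x, y) =
    x • EuclideanSpace.single (0 : Fin 2) (1 : ℝ) + y • EuclideanSpace.single 1 1 := vc_equiv_apply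
  have hec : Continuous e := by
    have : (e : ℝ × ℝ → EuclideanSpace ℝ (Fin 2)) = fun z =>
      z.1 • EuclideanSpace.single (0 : Fin 2) (1 : ℝ) + z.2 • EuclideanSpace.single 1 1 := by
      funext z; exact hap z.1 z.2
    rw [this]; fun_prop
  have k1 : ∀ x y, HasDerivAt (fun x => u (e (x, y)))
      (fderiv ℝ u (e (x, y)) (EuclideanSpace.single (0 : Fin 2) (1 : ℝ))) x := by
    intro x y
    refine (hdiff (e (x, y))).hasFDerivAt.comp_hasDerivAt x ?_
    simp only [hap]
    simpa using ((hasDerivAt_id x).smul_const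
      (EuclideanSpace.single (0 : Fin 2) (1 : ℝ))).add_const
        (y • EuclideanSpace.single (1 : Fin 2) (1 : ℝ))
  have k2 : ∀ x y, HasDerivAt (fun y => u (e (x, y)))
      (fderiv ℝ u (e (x, y)) (EuclideanSpace.single (1 : Fin 2) (1 : ℝ))) y := by
    intro x y
    refine (hdiff (e (x, y))).hasFDerivAt.comp_hasDerivAt y ?_
    simp only [hap]
    simpa using ((hasDerivAt_id y).smul_const
      (EuclideanSpace.single (1 : Fin 2) (1 : ℝ))).const_add
        (x • EuclideanSpace.single (0 : Fin 2) (1 : ℝ))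
  have hop : ∀ z (i : Fin 2), |fderiv ℝ u z (EuclideanSpace.single i (1 : ℝ))| ≤
      ‖fderiv ℝ u z‖ := by
    intro z i
    simpa using (fderiv ℝ u z).le_opNorm (EuclideanSpace.single i (1 : ℝ))
  obtain ⟨r1, r2⟩ := vc_prod (fun z => u (e z)) (fun z => ‖fderiv ℝ u (e z)‖)
    (hdiff.continuous.comp hec)
    (fun y x => (k1 x y).differentiableAt) (fun x y => (k2 x y).differentiableAt)
    (fun y x => by rw [(k1 x y).deriv]; exact hop _ _)
    (fun x y => by rw [(k2 x y).deriv]; exact hop _ _)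
    ((hmp.integrable_comp_emb e.measurableEmbedding).2 h2)
    ((hmp.integrable_comp_emb e.measurableEmbedding).2 hug)
  rw [hmp.integral_comp' (fun x => u x ^ 4),
    hmp.integral_comp' (fun x => |u x| * ‖fderiv ℝ u x‖)] at r2
  exact ⟨(hmp.integrable_comp_emb e.measurableEmbedding).1 r1, by linarith⟩

theorem vc_pointwise (w t : ℝ) :
    2 * t * w ^ 2 - t ^ 2 * (2 * w ^ 2 + w ^ 4 / 4) ≤ w * (Real.exp w - 1) := by
  have h1 : w ^ 2 / (1 + |w|) ≤ w * (Real.exp w - 1) := by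
    rw [div_le_iff₀ (by positivity)]
    rcases le_total 0 w with hw | hw
    · rw [abs_of_nonneg hw]
      have := Real.add_one_le_exp w
      nlinarith [mul_nonneg hw (by linarith : 0 ≤ Real.exp w - 1 - w),
        mul_nonneg (mul_nonneg hw hw) (by linarith : 0 ≤ Real.exp w - 1)]
    · rw [abs_of_nonpos hw]
      have h := Real.add_one_le_exp (-w)
      have h3 : Real.exp w * (1 - w) ≤ 1 := by
        calc Real.exp w * (1 - w) ≤ Real.exp w * Real.exp (-w) := by
              gcongr; linarith
          _ = 1 := by rw [← Real.exp_add]; simp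
      nlinarith [mul_nonneg (neg_nonneg.2 hw) (sub_nonneg.2 h3)]
  refine le_trans ?_ h1
  have hm : |w| ≤ 1 + w ^ 2 / 4 := by nlinarith [sq_nonneg (|w| - 2), sq_abs w]
  have h4 : 2 * t * w ^ 2 - t ^ 2 * (w ^ 2 * (1 + |w|)) ≤ w ^ 2 / (1 + |w|) := by
    have hp : 0 < 1 + |w| := by positivity
    rw [le_div_iff₀ hp]
    nlinarith [mul_nonneg (sq_nonneg w) (sq_nonneg (t * (1 + |w|) - 1))]
  nlinarith [mul_nonneg (mul_nonneg (sq_nonneg t) (sq_nonneg w)) (sub_nonneg.2 hm)]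

theorem vc_real (A B J I N c : ℝ) (hA : 0 ≤ A) (hB : 0 ≤ B)
    (hI : I ≤ 4 * (A * B)) (hJ : ∀ t : ℝ, 2 * t * A - t ^ 2 * (2 * A + I / 4) ≤ J)
    (hN : N ^ 2 = A + B) (hc : c ^ 2 ≤ 1) : c * N - c ^ 2 ≤ B + J := by
  have hd : 0 < 2 + B := by linarith
  have h1 : A / (2 + B) ≤ J := by
    refine le_trans ?_ (hJ (1 / (2 + B)))
    have : (1 / (2 + B)) ^ 2 * (2 * A + I / 4) ≤ (1 / (2 + B)) ^ 2 * (2 * A + A * B) := by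
      gcongr; linarith
    have e : 2 * (1 / (2 + B)) * A - (1 / (2 + B)) ^ 2 * (2 * A + A * B) = A / (2 + B) := by
      field_simp; ring
    linarith
  have h2 : c * N - c ^ 2 - B ≤ A / (2 + B) := by
    rw [le_div_iff₀ hd]
    nlinarith [sq_nonneg (N - c * (2 + B) / 2), mul_nonneg (sub_nonneg.2 hc) (sq_nonneg B),
      sq_nonneg c, sq_nonneg B]
  linarith

theorem vacuum_coercivity (ς u : EuclideanSpace ℝ (Fin 2) → ℝ)
    (hς2 : Integrable (fun x => (ς x) ^ 2))
    (hςsmall : Real.sqrt (∫ x, (ς x) ^ 2) < Real.sqrt (2 / Real.pi))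
    (hdiff : Differentiable ℝ u)
    (h2 : Integrable (fun x => (u x) ^ 2))
    (hg : Integrable (fun x => ‖gradient u x‖ ^ 2))
    (hexp : Integrable (fun x => u x * (Real.exp (u x) - 1)))
    (hςu : Integrable (fun x => ς x * u x)) :
    (∫ x, (‖gradient u x‖ ^ 2 + u x * (Real.exp (u x) - 1) - ς x * u x))
      ≥ (Real.sqrt (2 / Real.pi) - Real.sqrt (∫ x, (ς x) ^ 2)) *
          Real.sqrt ((∫ x, (u x) ^ 2) + ∫ x, ‖gradient u x‖ ^ 2)
        - 2 / Real.pi := by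
  obtain ⟨hi4, hl4⟩ := vc_l4 u hdiff h2 hg
  have hA : 0 ≤ ∫ x, (u x) ^ 2 := integral_nonneg fun x => sq_nonneg _
  have hB : 0 ≤ ∫ x, ‖gradient u x‖ ^ 2 := integral_nonneg fun x => sq_nonneg _
  have hcs := vc_cs ς u hς2 h2 hςu
  have hJ : ∀ t : ℝ, 2 * t * (∫ x, (u x) ^ 2) - t ^ 2 * (2 * (∫ x, (u x) ^ 2)
      + (∫ x, u x ^ 4) / 4) ≤ ∫ x, u x * (Real.exp (u x) - 1) := by
    intro t
    have i1 := h2.const_mul (2 * t)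
    have i2 := ((h2.const_mul 2).add (hi4.div_const 4)).const_mul (t ^ 2)
    have := integral_mono (i1.sub i2) hexp (fun x => vc_pointwise (u x) t)
    refine le_of_eq_of_le ?_ this
    rw [← integral_const_mul, ← integral_const_mul 2, ← integral_div,
      ← integral_add (h2.const_mul 2) (hi4.div_const 4), ← integral_const_mul]
    exact (integral_sub i1 i2).symm
  have hc2 : Real.sqrt (2 / Real.pi) ^ 2 = 2 / Real.pi := Real.sq_sqrt (by positivity)
  have hN := Real.sq_sqrt (add_nonneg hA hB)
  have main := vc_real _ _ _ _ _ (Real.sqrt (2 / Real.pi)) hA hB hl4 hJ hN (by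
    rw [hc2, div_le_one Real.pi_pos]; linarith [Real.pi_gt_three])
  rw [hc2] at main
  have hς : ∫ x, ς x * u x ≤ Real.sqrt (∫ x, (ς x) ^ 2) *
      Real.sqrt ((∫ x, (u x) ^ 2) + ∫ x, ‖gradient u x‖ ^ 2) := by
    rw [← Real.sqrt_mul (integral_nonneg fun x => sq_nonneg _)]
    apply Real.le_sqrt_of_sq_le
    refine hcs.trans (mul_le_mul_of_nonneg_left (by linarith) ?_)
    exact integral_nonneg fun x => sq_nonneg _
  have hsplit : (∫ x, (‖gradient u x‖ ^ 2 + u x * (Real.exp (u x) - 1) - ς x * u x))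
      = (∫ x, ‖gradient u x‖ ^ 2) + (∫ x, u x * (Real.exp (u x) - 1)) - ∫ x, ς x * u x := by
    rw [← integral_add hg hexp]
    exact integral_sub (hg.add hexp) hςu
  rw [hsplit, sub_mul]
  linarith
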